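/- Define (T v)(s) := ∫₀^s θ(s−1) v(θ) dθ + ∫_s^1 s(θ−1) v(θ) dθ and (R v)(s) := (d/ds)(T v)(s) for continuous v : [0,1] → ℝ. Then for all continuous v, w : [0,1] → ℝ, ∫₀¹ (T v)(s) · w(s) ds = −∫₀¹ (R v)(s) · (R w)(s) ds. -/

import Mathlib

open Set in
theorem heat_aux (v : ℝ → ℝ) (hv : ContinuousOn v (Set.Icc 0 1)) :
    ∃ V F G : ℝ → ℝ, Continuous V ∧ (∀ s ∈ Icc (0:ℝ) 1, V s = v s) ∧
      (∀ s ∈ Icc (0:ℝ) 1, (∫ θ in (0:ℝ)..s, θ * (s - 1) * v θ) +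
        (∫ θ in s..(1:ℝ), s * (θ - 1) * v θ) = F s) ∧
      (∀ s, HasDerivAt F (G s) s) ∧ (∀ s, HasDerivAt G (V s) s) ∧ F 0 = 0 ∧ F 1 = 0 := by
  let V : ℝ → ℝ := IccExtend (zero_le_one (α := ℝ)) ((Icc (0:ℝ) 1).domRestrict v)
  have hV : Continuous V := (continuousOn_iff_continuous_domRestrict.1 hv).Icc_extend'
  have hVv : ∀ s ∈ Icc (0:ℝ) 1, V s = v s := fun s hs => by
    simp [V, IccExtend_of_mem _ _ hs]
  have c1 : Continuous fun θ : ℝ => θ * V θ := by fun_prop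
  have c2 : Continuous fun θ : ℝ => (θ - 1) * V θ := by fun_prop
  let A : ℝ → ℝ := fun s => ∫ θ in (0:ℝ)..s, θ * V θ
  let B : ℝ → ℝ := fun s => ∫ θ in s..(1:ℝ), (θ - 1) * V θ
  have hA : ∀ s, HasDerivAt A (s * V s) s := fun s =>
    intervalIntegral.integral_hasDerivAt_right (c1.intervalIntegrable _ _)
      c1.stronglyMeasurable.stronglyMeasurableAtFilter c1.continuousAt
  have hB : ∀ s, HasDerivAt B (-((s - 1) * V s)) s := fun s =>
    intervalIntegral.integral_hasDerivAt_left (c2.intervalIntegrable _ _)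
      c2.stronglyMeasurable.stronglyMeasurableAtFilter c2.continuousAt
  refine ⟨V, fun s => (s - 1) * A s + s * B s, fun s => A s + B s, hV, hVv, ?_, ?_, ?_, ?_, ?_⟩
  · intro s hs
    simp only [A, B, ← intervalIntegral.integral_const_mul]
    congr 1
    · apply intervalIntegral.integral_congr
      intro θ hθ
      rw [uIcc_of_le hs.1] at hθ
      simp only [hVv θ ⟨hθ.1, hθ.2.trans hs.2⟩]
      ring
    · apply intervalIntegral.integral_congr
      intro θ hθ
      rw [uIcc_of_le hs.2] at hθ
      simp only [hVv θ ⟨hs.1.trans hθ.1, hθ.2⟩]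
      ring
  · intro s
    have := (((hasDerivAt_id s).sub_const 1).mul (hA s)).add ((hasDerivAt_id s).mul (hB s))
    refine this.congr_deriv ?_
    simp only [id]
    ring
  · intro s
    refine ((hA s).add (hB s)).congr_deriv ?_
    ring
  · simp [A]
  · simp [B]

/-- the identity `T = −R*R` of the paper's reverse-time heat-equation
argument: `⟨T v, w⟩_{L²} = −⟨R v, R w⟩_{L²}` where `R = ∂ₛ ∘ T`. -/
theorem heat_Top_eq_neg_R_star_R
    (T : (ℝ → ℝ) → ℝ → ℝ)
    (hT : ∀ (v : ℝ → ℝ) (s : ℝ),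
      T v s = (∫ θ in (0:ℝ)..s, θ * (s - 1) * v θ) + ∫ θ in s..(1:ℝ), s * (θ - 1) * v θ)
    (R : (ℝ → ℝ) → ℝ → ℝ)
    (hR : ∀ (v : ℝ → ℝ) (s : ℝ), R v s = derivWithin (T v) (Set.Icc 0 1) s)
    (v w : ℝ → ℝ) (hv : ContinuousOn v (Set.Icc 0 1)) (hw : ContinuousOn w (Set.Icc 0 1)) :
    ∫ s in (0:ℝ)..1, T v s * w s = -∫ s in (0:ℝ)..1, R v s * R w s := by
  obtain ⟨V, F, G, hV, hVv, hF, hFG, hGV, hF0, hF1⟩ := heat_aux v hv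
  obtain ⟨W, F', G', hW, hWw, hF', hFG', hGW, hF0', hF1'⟩ := heat_aux w hw
  have key : ∀ (u f g : ℝ → ℝ), (∀ s ∈ Set.Icc (0:ℝ) 1, T u s = f s) →
      (∀ s, HasDerivAt f (g s) s) → ∀ s ∈ Set.Icc (0:ℝ) 1, R u s = g s := by
    intro u f g h1 h2 s hs
    rw [hR, derivWithin_congr h1 (h1 s hs)]
    exact (h2 s).hasDerivWithinAt.derivWithin (uniqueDiffOn_Icc zero_lt_one s hs)
  have e1 : ∀ s ∈ Set.Icc (0:ℝ) 1, T v s = F s := fun s hs => (hT v s).trans (hF s hs)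
  have e2 : ∀ s ∈ Set.Icc (0:ℝ) 1, T w s = F' s := fun s hs => (hT w s).trans (hF' s hs)
  have r1 := key v F G e1 hFG
  have r2 := key w F' G' e2 hFG'
  have hG : Continuous G := continuous_iff_continuousAt.2 fun s => (hGV s).continuousAt
  have i1 : ∫ s in (0:ℝ)..1, T v s * w s = ∫ s in (0:ℝ)..1, F s * W s := by
    apply intervalIntegral.integral_congr
    intro s hs
    rw [Set.uIcc_of_le zero_le_one] at hs
    simp only [e1 s hs, hWw s hs]
  have i2 : ∫ s in (0:ℝ)..1, R v s * R w s = ∫ s in (0:ℝ)..1, G s * G' s := by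
    apply intervalIntegral.integral_congr
    intro s hs
    rw [Set.uIcc_of_le zero_le_one] at hs
    simp only [r1 s hs, r2 s hs]
  rw [i1, i2, intervalIntegral.integral_mul_deriv_eq_deriv_mul (fun s _ => hFG s)
    (fun s _ => hGW s) (hG.intervalIntegrable _ _) (hW.intervalIntegrable _ _), hF0, hF1]
  ring
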